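/- Let 𝔤 = 𝔤₁ ⊕ ⋯ ⊕ 𝔤_r be a finite-dimensional real Lie algebra that is the direct sum of ideals 𝔤₁, …, 𝔤_r, each of which is a simple Lie algebra with negative-definite Killing form, and let 𝔥 ⊆ 𝔤 be a nonzero Lie subalgebra. Then dim N(𝔤,𝔥) ≤ r − 1. -/

import Mathlib

/-- The space `N(𝔤,𝔥)` of invariant symmetric bilinear forms on a real Lie algebra `L`
vanishing identically on a subspace `p`. -/
noncomputable def NForms (L : Type*) [LieRing L] [LieAlgebra ℝ L] (p : Submodule ℝ L) :
    Submodule ℝ (L →ₗ[ℝ] L →ₗ[ℝ] ℝ) where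
  carrier := {B | (∀ x y z : L, B ⁅x, y⁆ z = B x ⁅y, z⁆) ∧ (∀ x y : L, B x y = B y x) ∧
    ∀ x ∈ p, ∀ y ∈ p, B x y = 0}
  add_mem' := by
    rintro B C ⟨hB1, hB2, hB3⟩ ⟨hC1, hC2, hC3⟩
    exact ⟨fun x y z => by simp [hB1 x y z, hC1 x y z],
      fun x y => by simp [hB2 x y, hC2 x y],
      fun x hx y hy => by simp [hB3 x hx y hy, hC3 x hx y hy]⟩
  zero_mem' := ⟨fun _ _ _ => by simp, fun _ _ => by simp, fun _ _ _ _ => by simp⟩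
  smul_mem' := by
    rintro c B ⟨h1, h2, h3⟩
    exact ⟨fun x y z => by simp [h1 x y z], fun x y => by simp [h2 x y],
      fun x hx y hy => by simp [h3 x hx y hy]⟩

/-!
By Schur's lemma for the compact simple ideals, an invariant symmetric form restricts to each `𝔤ᵢ`
as a multiple of the (definite) Killing form, while distinct simple ideals are orthogonal for every
invariant form. Hence the space `NForms L ⊥` of all invariant symmetric forms has dimension at most
`r`. The Killing form is negative definite on the whole of `𝔤`, so it belongs to `NForms L ⊥` but
to no `NForms L p` with `p ≠ ⊥`; such an `NForms L p` is therefore a proper subspace of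
`NForms L ⊥`.
-/

open LinearMap (BilinForm)
open LieAlgebra LieAlgebra.InvariantForm
open scoped InnerProductSpace

section BilinForm

theorem bilinForm_eq_zero_of_iSup_eq_top {R M ι : Type*} [CommSemiring R] [AddCommMonoid M]
    [Module R M] {p : ι → Submodule R M} (hp : ⨆ i, p i = ⊤) {B : BilinForm R M}
    (hB : ∀ i k, ∀ x ∈ p i, ∀ y ∈ p k, B x y = 0) : B = 0 := by
  have le_ker (i : ι) : p i ≤ B.ker := fun x hx ↦ by
    rw [LinearMap.mem_ker, ← LinearMap.ker_eq_top, ← top_le_iff, ← hp]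
    exact iSup_le fun k y hy ↦ hB i k x hx y hy
  exact LinearMap.ker_eq_top.mp (top_le_iff.mp (hp ▸ iSup_le le_ker))

theorem bilinForm_apply_self_neg_of_iSup_eq_top {R M ι : Type*} [CommSemiring R] [PartialOrder R]
    [IsOrderedCancelAddMonoid R] [AddCommMonoid M] [Module R M] {p : ι → Submodule R M}
    (hp : ⨆ i, p i = ⊤) {B : BilinForm R M} (hneg : ∀ i, ∀ x ∈ p i, x ≠ 0 → B x x < 0)
    (horth : ∀ i k, i ≠ k → ∀ x ∈ p i, ∀ y ∈ p k, B x y = 0) {x : M} (hx : x ≠ 0) :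
    B x x < 0 := by
  obtain ⟨f, hf, rfl⟩ := (Submodule.mem_iSup_iff_exists_finsupp p x).mp (hp ▸ Submodule.mem_top)
  have apply_sum (i : ι) (hi : i ∈ f.support) :
      ∑ k ∈ f.support, B (f i) (f k) = B (f i) (f i) :=
    Finset.sum_eq_single_of_mem i hi fun k _ hki ↦ horth i k hki.symm _ (hf i) _ (hf k)
  have support_nonempty : f.support.Nonempty := by
    rw [Finsupp.support_nonempty_iff]
    rintro rfl
    exact hx Finsupp.sum_zero_index
  calc B (f.sum fun _ y ↦ y) (f.sum fun _ y ↦ y)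
      = ∑ i ∈ f.support, ∑ k ∈ f.support, B (f i) (f k) := by
        simp only [Finsupp.sum, map_sum, LinearMap.sum_apply]
        exact Finset.sum_comm
    _ = ∑ i ∈ f.support, B (f i) (f i) := Finset.sum_congr rfl apply_sum
    _ < 0 := Finset.sum_neg (fun i hi ↦ hneg i _ (hf i) (Finsupp.mem_support_iff.mp hi))
        support_nonempty

theorem exists_apply_eq_mul_inner {V : Type*} [NormedAddCommGroup V] [InnerProductSpace ℝ V]
    [FiniteDimensional ℝ V] [Nontrivial V] {B : BilinForm ℝ V} (hB : B.IsSymm) :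
    ∃ c : ℝ, ∃ v ≠ 0, ∀ w, B v w = c * ⟪v, w⟫_ℝ := by
  let T : V →ₗ[ℝ] V :=
    (InnerProductSpace.toDual ℝ V).symm.toLinearMap ∘ₗ
      LinearMap.toContinuousLinearMap.toLinearMap ∘ₗ B
  have inner_T (v w : V) : ⟪T v, w⟫_ℝ = B v w := by simp [T]
  have hT : T.IsSymmetric := fun v w ↦ by
    rw [inner_T, real_inner_comm, inner_T, hB.eq]
  obtain ⟨v, hv⟩ := hT.hasEigenvalue_iSup_of_finiteDimensional.exists_hasEigenvector
  exact ⟨_, v, hv.2, fun w ↦ by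
    rw [← inner_T, hv.apply_eq_smul, real_inner_smul_left]⟩

theorem exists_apply_eq_mul_of_posDef {V : Type*} [AddCommGroup V] [Module ℝ V]
    [FiniteDimensional ℝ V] [Nontrivial V] {P B : BilinForm ℝ V} (hP : P.IsSymm)
    (hpos : ∀ x ≠ 0, 0 < P x x) (hB : B.IsSymm) :
    ∃ c : ℝ, ∃ v ≠ 0, ∀ w, B v w = c * P v w := by
  let core : InnerProductSpace.Core ℝ V :=
    { inner x y := P x y
      conj_inner_symm x y := hP.eq y x
      re_inner_nonneg x := by
        rcases eq_or_ne x 0 with rfl | hx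
        · simp
        · exact (hpos x hx).le
      add_left x y z := by simp
      smul_left x y c := by simp
      definite x hx := by_contra fun hne ↦ (hpos x hne).ne' hx }
  let _ : NormedAddCommGroup V := core.toNormedAddCommGroup
  let _ : InnerProductSpace ℝ V := InnerProductSpace.ofCore core.toCore
  exact exists_apply_eq_mul_inner hB

end BilinForm

section SimpleIdeal

variable {R L : Type*} [CommRing R] [LieRing L] [LieAlgebra R L]

theorem isAtom_of_isSimple (I : LieIdeal R L) [IsSimple R I] : IsAtom I := by
  refine ⟨?_, fun J hJ ↦ ?_⟩
  · rintro rfl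
    exact IsSimple.non_abelian R (L := (⊥ : LieIdeal R L)) inferInstance
  · rcases IsSimple.eq_bot_or_eq_top (J.comap I.incl) with h | h
    · exact (LieIdeal.comap_incl_eq_bot.mp h).eq_bot_of_ge hJ.le
    · exact absurd (LieIdeal.comap_incl_eq_top.mp h) hJ.not_ge

theorem lie_self_eq_self_of_isSimple (I : LieIdeal R L) [IsSimple R I] : ⁅I, I⁆ = I :=
  lie_eq_self_of_isAtom_of_nonabelian I (isAtom_of_isSimple I)
    (IsSimple.non_abelian R)

theorem lie_self_le_orthogonal_of_disjoint {I J : LieIdeal R L} (hIJ : Disjoint I J)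
    {B : BilinForm R L} (hB : B.lieInvariant L) : ⁅I, I⁆ ≤ orthogonal B hB J := by
  rw [LieSubmodule.lie_le_iff]
  intro a ha b _
  rw [mem_orthogonal]
  intro y hy
  have lie_eq_zero : ⁅a, y⁆ = 0 := by
    rw [← LieSubmodule.mem_bot (R := R) (L := L), ← hIJ.eq_bot]
    exact ⟨lie_mem_left R L I a y ha, lie_mem_right R L J a y hy⟩
  rw [← neg_eq_zero, ← hB, lie_eq_zero, map_zero, LinearMap.zero_apply]

theorem apply_eq_zero_of_isSimple_of_ne {I J : LieIdeal R L} [IsSimple R I] [IsSimple R J]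
    (hIJ : I ≠ J) {B : BilinForm R L} (hB : B.lieInvariant L) {x y : L} (hx : x ∈ I)
    (hy : y ∈ J) : B x y = 0 := by
  have hdisj : Disjoint J I := (isAtom_of_isSimple J).disjoint_of_ne (isAtom_of_isSimple I) hIJ.symm
  have hle := lie_self_le_orthogonal_of_disjoint hdisj hB
  rw [lie_self_eq_self_of_isSimple] at hle
  exact (mem_orthogonal B hB I y).mp (hle hy) x hx

end SimpleIdeal

section Schur

theorem exists_eq_smul_of_isSimple {S : Type*} [LieRing S] [LieAlgebra ℝ S]
    [FiniteDimensional ℝ S] [IsSimple ℝ S] {P B : BilinForm ℝ S} (hP : P.lieInvariant S)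
    (hPsymm : P.IsSymm) (hpos : ∀ x ≠ 0, 0 < P x x) (hB : B.lieInvariant S)
    (hBsymm : B.IsSymm) : ∃ c : ℝ, B = c • P := by
  have := IsSimple.nontrivial ℝ S
  obtain ⟨c, v, hv, hvw⟩ := exists_apply_eq_mul_of_posDef hPsymm hpos hBsymm
  have hinv : (B - c • P).lieInvariant S := by
    rw [LinearMap.BilinForm.lieInvariant_iff] at hP hB ⊢
    exact sub_mem hB (SMulMemClass.smul_mem c hP)
  have v_mem : v ∈ orthogonal (B - c • P) hinv ⊤ := by
    rw [mem_orthogonal]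
    intro w _
    simp [hBsymm.eq w v, hPsymm.eq w v, hvw]
  have orthogonal_eq_top : orthogonal (B - c • P) hinv ⊤ = ⊤ :=
    (IsSimple.eq_bot_or_eq_top _).resolve_left fun h ↦
      hv ((LieSubmodule.mem_bot v).mp (h ▸ v_mem))
  refine ⟨c, sub_eq_zero.mp (LinearMap.ext₂ fun x y ↦ ?_)⟩
  have y_mem : y ∈ orthogonal (B - c • P) hinv ⊤ := by
    rw [orthogonal_eq_top]
    exact LieSubmodule.mem_top y
  exact (mem_orthogonal _ hinv ⊤ y).mp y_mem x (LieSubmodule.mem_top x)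

variable {L : Type*} [LieRing L] [LieAlgebra ℝ L]

theorem exists_apply_eq_mul_killingForm {I : LieIdeal ℝ L} [FiniteDimensional ℝ I]
    [IsSimple ℝ I] (hneg : ∀ x ∈ I, x ≠ 0 → killingForm ℝ L x x < 0) {B : BilinForm ℝ L}
    (hB : B.lieInvariant L) (hBsymm : B.IsSymm) :
    ∃ c : ℝ, ∀ x ∈ I, ∀ y ∈ I, B x y = c * killingForm ℝ L x y := by
  let P : BilinForm ℝ I := -LinearMap.BilinForm.restrict (killingForm ℝ L) I.toSubmodule
  have hP : P.lieInvariant I := fun x y z ↦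
    congrArg Neg.neg (LieModule.traceForm_lieInvariant ℝ L L (x : L) (y : L) (z : L))
  have hPsymm : P.IsSymm :=
    ⟨fun x y ↦ congrArg Neg.neg (LieModule.traceForm_comm ℝ L L (x : L) (y : L))⟩
  have hpos (x : I) (hx : x ≠ 0) : 0 < P x x :=
    neg_pos.mpr (hneg x x.2 fun h ↦ hx (Subtype.ext h))
  obtain ⟨c, hc⟩ := exists_eq_smul_of_isSimple (B := B.restrict I.toSubmodule) hP hPsymm hpos
    (fun x y z ↦ hB (x : L) (y : L) (z : L)) ⟨fun x y ↦ hBsymm.eq (x : L) (y : L)⟩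
  refine ⟨-c, fun x hx y hy ↦ ?_⟩
  calc B x y = c * -killingForm ℝ L x y := LinearMap.congr_fun₂ hc ⟨x, hx⟩ ⟨y, hy⟩
    _ = -c * killingForm ℝ L x y := by ring

end Schur

theorem mem_NForms_iff {L : Type*} [LieRing L] [LieAlgebra ℝ L] {p : Submodule ℝ L}
    {B : BilinForm ℝ L} :
    B ∈ NForms L p ↔ B.lieInvariant L ∧ B.IsSymm ∧ ∀ x ∈ p, ∀ y ∈ p, B x y = 0 := by
  have lieInvariant_iff : B.lieInvariant L ↔ ∀ x y z : L, B ⁅x, y⁆ z = B x ⁅y, z⁆ := by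
    rw [LinearMap.BilinForm.lieInvariant, forall_comm]
    refine forall₃_congr fun x y z ↦ ?_
    rw [← lie_skew, map_neg, LinearMap.neg_apply, neg_inj]
  rw [lieInvariant_iff, LinearMap.BilinForm.isSymm_def]
  rfl

section CompactDecomposition

variable {L ι : Type*} [LieRing L] [LieAlgebra ℝ L] {g : ι → LieIdeal ℝ L}
  [∀ i, IsSimple ℝ (g i)] (hneg : ∀ i, ∀ x ∈ g i, x ≠ 0 → killingForm ℝ L x x < 0)
  (hsup : ⨆ i, (g i).toSubmodule = ⊤)
include hneg hsup

theorem killingForm_apply_self_neg {x : L} (hx : x ≠ 0) : killingForm ℝ L x x < 0 := by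
  -- Passing to the set of ideals makes the family injective.
  refine bilinForm_apply_self_neg_of_iSup_eq_top
    (p := fun I : Set.range g ↦ (I : LieIdeal ℝ L).toSubmodule) ?_ ?_ ?_ hx
  · rw [iSup_range', hsup]
  · rintro ⟨_, i, rfl⟩
    exact hneg i
  · rintro ⟨_, i, rfl⟩ ⟨_, k, rfl⟩ hik x hx y hy
    exact apply_eq_zero_of_isSimple_of_ne (fun h ↦ hik (Subtype.ext h))
      (LieModule.traceForm_lieInvariant ℝ L L) hx hy

theorem eq_zero_of_forall_apply_self_eq_zero [FiniteDimensional ℝ L] {B : BilinForm ℝ L}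
    (hB : B.lieInvariant L) (hBsymm : B.IsSymm) {v : ι → L} (hv : ∀ i, v i ∈ g i)
    (hv0 : ∀ i, v i ≠ 0) (hBv : ∀ i, B (v i) (v i) = 0) : B = 0 := by
  have apply_eq_zero (i : ι) : ∀ x ∈ g i, ∀ y ∈ g i, B x y = 0 := by
    obtain ⟨c, hc⟩ := exists_apply_eq_mul_killingForm (hneg i) hB hBsymm
    have hc0 : c = 0 := (mul_eq_zero.mp ((hc _ (hv i) _ (hv i)).symm.trans (hBv i))).resolve_right
      (hneg i _ (hv i) (hv0 i)).ne
    intro x hx y hy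
    rw [hc x hx y hy, hc0, zero_mul]
  refine bilinForm_eq_zero_of_iSup_eq_top hsup fun i k x hx y hy ↦ ?_
  by_cases hik : g i = g k
  · exact apply_eq_zero k x (hik ▸ hx) y hy
  · exact apply_eq_zero_of_isSimple_of_ne hik hB hx hy

theorem finrank_NForms_bot_le [FiniteDimensional ℝ L] [Fintype ι] :
    Module.finrank ℝ (NForms L ⊥) ≤ Fintype.card ι := by
  have exists_ne_zero (i : ι) : ∃ v ∈ (g i).toSubmodule, v ≠ 0 :=
    Submodule.exists_mem_ne_zero_of_ne_bot <| by
      simpa using (isAtom_of_isSimple (g i)).ne_bot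
  choose v hv hv0 using exists_ne_zero
  let eval : BilinForm ℝ L →ₗ[ℝ] ι → ℝ :=
    LinearMap.pi fun i ↦ LinearMap.applyₗ (v i) ∘ₗ LinearMap.applyₗ (v i)
  have eval_injective : Function.Injective (eval.domRestrict (NForms L ⊥)) := by
    rw [LinearMap.injective_domRestrict_iff (M := BilinForm ℝ L), Submodule.disjoint_def]
    intro B hBN hBv
    obtain ⟨hB, hBsymm, -⟩ := mem_NForms_iff.mp hBN
    exact eq_zero_of_forall_apply_self_eq_zero hneg hsup hB hBsymm hv hv0 (congrFun hBv)
  simpa only [Module.finrank_fintype_fun_eq_card] using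
    LinearMap.finrank_le_finrank_of_injective eval_injective

theorem NForms_lt_NForms_bot {p : Submodule ℝ L} (hp : p ≠ ⊥) : NForms L p < NForms L ⊥ := by
  refine SetLike.lt_iff_le_and_exists.mpr ⟨fun B hB ↦ ?_, killingForm ℝ L, ?_, fun hκ ↦ ?_⟩
  · obtain ⟨hinv, hsymm, -⟩ := mem_NForms_iff.mp hB
    exact mem_NForms_iff.mpr ⟨hinv, hsymm, by simp⟩
  · exact mem_NForms_iff.mpr ⟨LieModule.traceForm_lieInvariant ℝ L L,
      ⟨LieModule.traceForm_comm ℝ L L⟩, by simp⟩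
  · obtain ⟨x, hxp, hx⟩ := Submodule.exists_mem_ne_zero_of_ne_bot hp
    exact (killingForm_apply_self_neg hneg hsup hx).ne ((mem_NForms_iff.mp hκ).2.2 x hxp x hxp)

end CompactDecomposition

theorem stmt12_general {L ι : Type*} [LieRing L] [LieAlgebra ℝ L] [FiniteDimensional ℝ L]
    [Fintype ι] (g : ι → LieIdeal ℝ L) [∀ i, IsSimple ℝ (g i)]
    (hneg : ∀ i, ∀ x ∈ g i, x ≠ 0 → killingForm ℝ L x x < 0)
    (hsup : ⨆ i, (g i).toSubmodule = ⊤) (p : Submodule ℝ L) (hp : p ≠ ⊥) :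
    Module.finrank ℝ (NForms L p) ≤ Fintype.card ι - 1 :=
  Nat.le_sub_one_of_lt <|
    (Submodule.finrank_lt_finrank_of_lt (V := BilinForm ℝ L)
      (NForms_lt_NForms_bot hneg hsup hp)).trans_le (finrank_NForms_bot_le hneg hsup)

/-- Let `𝔤 = 𝔤₁ ⊕ ⋯ ⊕ 𝔤ᵣ` be a direct sum of ideals, each a simple Lie
algebra with negative-definite Killing form, and let `𝔥 ⊆ 𝔤` be a nonzero Lie subalgebra.
Then `dim N(𝔤,𝔥) ≤ r − 1`. -/
theorem stmt12 {L : Type*} [LieRing L] [LieAlgebra ℝ L] [FiniteDimensional ℝ L]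
    (r : ℕ) (g : Fin r → LieIdeal ℝ L)
    (hsimple : ∀ i, LieAlgebra.IsSimple ℝ ↥(g i))
    (hneg : ∀ i, ∀ x ∈ g i, x ≠ 0 → killingForm ℝ L x x < 0)
    (hsup : (⨆ i, (LieSubmodule.toSubmodule (g i) : Submodule ℝ L)) = ⊤)
    (hindep : iSupIndep (fun i => (LieSubmodule.toSubmodule (g i) : Submodule ℝ L)))
    (h : LieSubalgebra ℝ L) (hne : h ≠ ⊥) :
    Module.finrank ℝ ↥(NForms L h.toSubmodule) ≤ r - 1 := by
  simpa only [Fintype.card_fin] using stmt12_general g hneg hsup h.toSubmodule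
    (by simpa using hne)
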